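/- Let P be a collection of nonempty bounded open intervals of ℝ with ∪P ⊆ (a,b) for real numbers a < b. If there exists a sequence of k pairwise disjoint nonempty open subintervals (a_i, b_i), i = 1, …, k, of (a,b), none of which is dominated by P, then (a,b) has an outer cover with respect to P having at least ⌈k/2⌉ elements. -/

import Mathlib

open Set

/-- A linked list of (nonempty bounded open) intervals `(a i, b i)` of `ℝ`, indexed by a
nonempty set `S` of consecutive integers, consecutive intervals overlapping and the chain
condition `a i < b (i-1) < a (i+1) < b i` holding whenever the indices involved lie in `S`. -/
structure LinkedList where
  S : Set ℤ
  nonempty : S.Nonempty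
  consecutive : ∀ i ∈ S, ∀ k ∈ S, ∀ j : ℤ, i ≤ j → j ≤ k → j ∈ S
  a : ℤ → ℝ
  b : ℤ → ℝ
  lt : ∀ i ∈ S, a i < b i
  mono_a : ∀ i : ℤ, i ∈ S → i + 1 ∈ S → a i < a (i + 1)
  mono_b : ∀ i : ℤ, i ∈ S → i + 1 ∈ S → b i < b (i + 1)
  overlap : ∀ i : ℤ, i ∈ S → i + 1 ∈ S → a (i + 1) < b i
  gap : ∀ i : ℤ, i ∈ S → i + 2 ∈ S → b i < a (i + 2)

namespace LinkedList

/-- The `i`-th interval of the list. -/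
def interval (L : LinkedList) (i : ℤ) : Set ℝ := Ioo (L.a i) (L.b i)

/-- The union of the intervals of the list. -/
def union (L : LinkedList) : Set ℝ := ⋃ i ∈ L.S, L.interval i

/-- The list has a least element. -/
def HasLeast (L : LinkedList) : Prop := ∃ i ∈ L.S, ∀ j ∈ L.S, i ≤ j

/-- The list has a greatest element. -/
def HasGreatest (L : LinkedList) : Prop := ∃ i ∈ L.S, ∀ j ∈ L.S, j ≤ i

end LinkedList

/-- `P` is a collection of nonempty bounded open intervals of `ℝ`. -/
def IsIntervalCollection (P : Set (Set ℝ)) : Prop :=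
  ∀ J ∈ P, ∃ c d : ℝ, c < d ∧ J = Ioo c d

/-- An interval is dominated by `P` if it is contained in some member of `P`. -/
def Dominated (P : Set (Set ℝ)) (J : Set ℝ) : Prop := ∃ K ∈ P, J ⊆ K

/-- An interval is approximately dominated by `P` if it is the union of an increasing
sequence of intervals, each dominated by `P`. -/
def ApproxDominated (P : Set (Set ℝ)) (J : Set ℝ) : Prop :=
  ∃ c d : ℕ → ℝ, (∀ n, c n < d n) ∧
    (∀ n, Ioo (c n) (d n) ⊆ Ioo (c (n + 1)) (d (n + 1))) ∧
    (∀ n, Dominated P (Ioo (c n) (d n))) ∧ J = ⋃ n, Ioo (c n) (d n)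

/-- An inner cover of `(x, y)` with respect to `P`: a linked list with union `(x, y)`, each of
whose intervals is approximately dominated by `P`. -/
def IsInnerCover (P : Set (Set ℝ)) (x y : ℝ) (L : LinkedList) : Prop :=
  L.union = Ioo x y ∧ ∀ i ∈ L.S, ApproxDominated P (L.interval i)

/-- An outer cover of `(x, y)` with respect to `P`: a linked list with union `(x, y)` such that
every member of `P` is contained in some interval of the list. -/
def IsOuterCover (P : Set (Set ℝ)) (x y : ℝ) (L : LinkedList) : Prop :=
  L.union = Ioo x y ∧ ∀ J ∈ P, ∃ i ∈ L.S, J ⊆ L.interval i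

/-- `L_P(x)`: the infimum of left endpoints of members of `P` containing `x`. -/
noncomputable def leftEnd (P : Set (Set ℝ)) (x : ℝ) : ℝ :=
  sInf {c | ∃ d, Ioo c d ∈ P ∧ x ∈ Ioo c d}

/-- `R_P(x)`: the supremum of right endpoints of members of `P` containing `x`. -/
noncomputable def rightEnd (P : Set (Set ℝ)) (x : ℝ) : ℝ :=
  sSup {d | ∃ c, Ioo c d ∈ P ∧ x ∈ Ioo c d}

/-! Sort the disjoint undominated intervals as `J 0, …, J (k - 1)` and use every second one,
`J 1, J 3, …`, as the overlaps of consecutive intervals of a linked list. The skipped intervals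
leave the room required by the chain condition. A member of `P` that lies in no interval of the list
would have to contain an overlap, which would then be dominated. -/

namespace LinkedList

section Cover

variable {L : LinkedList} {m n : ℤ}

theorem ordConnected (L : LinkedList) : L.S.OrdConnected :=
  ordConnected_iff.2 fun i hi k hk _ j hj => L.consecutive i hi k hk j hj.1 hj.2

theorem strictMonoOn_a (L : LinkedList) : StrictMonoOn L.a L.S :=
  strictMonoOn_of_lt_add_one L.ordConnected fun i _ => L.mono_a i

theorem strictMonoOn_b (L : LinkedList) : StrictMonoOn L.b L.S :=
  strictMonoOn_of_lt_add_one L.ordConnected fun i _ => L.mono_b i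

theorem exists_subset_interval (hm : IsLeast L.S m) (hn : IsGreatest L.S n) {J : Set ℝ}
    (hJ : J.OrdConnected) (hJsub : J ⊆ Ioo (L.a m) (L.b n))
    (hoverlap : ∀ i ∈ L.S, i + 1 ∈ L.S → ¬Ioo (L.a (i + 1)) (L.b i) ⊆ J) :
    ∃ i ∈ L.S, J ⊆ L.interval i := by
  obtain ⟨i, ⟨hi, hJb⟩, hleast⟩ : ∃ i, (i ∈ L.S ∧ J ⊆ Iio (L.b i)) ∧
      ∀ j, j ∈ L.S ∧ J ⊆ Iio (L.b j) → i ≤ j :=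
    Int.exists_least_of_bdd ⟨m, fun j hj => hm.2 hj.1⟩ ⟨n, hn.1, hJsub.trans Ioo_subset_Iio_self⟩
  refine ⟨i, hi, fun x hx => ⟨?_, hJb hx⟩⟩
  rcases (hm.2 hi).eq_or_lt with rfl | hmi
  · exact (hJsub hx).1
  by_contra! hxa
  have hpred : i - 1 ∈ L.S := L.consecutive m hm.1 i hi _ (by lia) (by lia)
  obtain ⟨y, hy, hby⟩ : ∃ y ∈ J, L.b (i - 1) ≤ y := by
    by_contra! hJpred
    exact absurd (hleast (i - 1) ⟨hpred, hJpred⟩) (by lia)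
  refine hoverlap (i - 1) hpred (by simpa using hi) ?_
  rw [sub_add_cancel]
  exact (Ioo_subset_Icc_self.trans (Icc_subset_Icc hxa hby)).trans (hJ.out hx hy)

theorem union_eq_Ioo (hm : IsLeast L.S m) (hn : IsGreatest L.S n) :
    L.union = Ioo (L.a m) (L.b n) := by
  refine Subset.antisymm (iUnion₂_subset fun i hi => Ioo_subset_Ioo ?_ ?_) fun x hx => ?_
  · exact L.strictMonoOn_a.monotoneOn hm.1 hi (hm.2 hi)
  · exact L.strictMonoOn_b.monotoneOn hi hn.1 (hn.2 hi)
  · obtain ⟨i, hi, hxi⟩ := exists_subset_interval hm hn ordConnected_singleton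
      (singleton_subset_iff.2 hx) fun i hi hi' hsub =>
        Ioo_infinite (L.overlap i hi hi') ((finite_singleton x).subset hsub)
    exact mem_iUnion₂.2 ⟨i, hi, singleton_subset_iff.1 hxi⟩

theorem isOuterCover_of_not_dominated (hm : IsLeast L.S m) (hn : IsGreatest L.S n)
    {P : Set (Set ℝ)} (hP : ∀ J ∈ P, J.OrdConnected) (hU : ⋃₀ P ⊆ Ioo (L.a m) (L.b n))
    (hdom : ∀ i ∈ L.S, i + 1 ∈ L.S → ¬Dominated P (Ioo (L.a (i + 1)) (L.b i))) :
    IsOuterCover P (L.a m) (L.b n) L :=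
  ⟨union_eq_Ioo hm hn, fun J hJ => exists_subset_interval hm hn (hP J hJ)
    ((subset_sUnion_of_mem hJ).trans hU) fun i hi hi' hsub => hdom i hi hi' ⟨J, hJ, hsub⟩⟩

end Cover

end LinkedList

/-- The endpoints form a strict chain `a < c 0 < d 0 < c 1 < d 1 < ⋯ < d (n - 1) < b`, which is what
the intervals `(c j, d j)` need in order to be the overlaps of a linked list with union `(a, b)`. -/
structure IsEndpointChain {α : Type*} [LT α] {n : ℕ} (a b : α) (c d : Fin n → α) : Prop where
  lt_ends : a < b
  lt_left : ∀ j, a < c j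
  left_lt_right : ∀ j, c j < d j
  right_lt : ∀ j, d j < b
  right_lt_left : ∀ i j, i < j → d i < c j

namespace LinkedList

variable {a b : ℝ} {n : ℕ} {c d : Fin n → ℝ}

/-- The linked list `(a, d 0), (c 0, d 1), …, (c (n - 1), b)`, indexed by `0, …, n`, whose
consecutive intervals overlap in the prescribed intervals `(c j, d j)`. -/
def ofOverlaps (h : IsEndpointChain a b c d) : LinkedList where
  S := Icc 0 n
  nonempty := nonempty_Icc.2 n.cast_nonneg
  consecutive _ hi _ hk _ hij hjk := ⟨hi.1.trans hij, hjk.trans hk.2⟩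
  a i := if hi : 0 < i ∧ i ≤ n then c ⟨(i - 1).toNat, by lia⟩ else a
  b i := if hi : 0 ≤ i ∧ i < n then d ⟨i.toNat, by lia⟩ else b
  lt := by
    rintro i ⟨_, _⟩
    split_ifs
    · exact ((h.left_lt_right _).trans (h.right_lt_left _ _ (Fin.mk_lt_mk.2 (by lia)))).trans
        (h.left_lt_right _)
    all_goals grind [IsEndpointChain]
  mono_a := by
    rintro i ⟨_, _⟩ ⟨_, _⟩
    split_ifs
    · exact (h.left_lt_right _).trans (h.right_lt_left _ _ (Fin.mk_lt_mk.2 (by lia)))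
    all_goals grind [IsEndpointChain]
  mono_b := by
    rintro i ⟨_, _⟩ ⟨_, _⟩
    split_ifs
    · exact (h.right_lt_left _ _ (Fin.mk_lt_mk.2 (by lia))).trans (h.left_lt_right _)
    all_goals grind [IsEndpointChain]
  overlap := by
    rintro i ⟨_, _⟩ ⟨_, _⟩
    simp only [add_sub_cancel_right]
    rw [dif_pos (by lia), dif_pos (by lia)]
    exact h.left_lt_right _
  gap := by
    rintro i ⟨_, _⟩ ⟨_, _⟩
    rw [dif_pos (by lia), dif_pos (by lia)]
    exact h.right_lt_left _ _ (Fin.mk_lt_mk.2 (by lia))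

theorem isOuterCover_ofOverlaps (h : IsEndpointChain a b c d) {P : Set (Set ℝ)}
    (hP : ∀ J ∈ P, J.OrdConnected) (hU : ⋃₀ P ⊆ Ioo a b)
    (hdom : ∀ j, ¬Dominated P (Ioo (c j) (d j))) : IsOuterCover P a b (ofOverlaps h) := by
  have ha : (ofOverlaps h).a 0 = a := by simp [ofOverlaps]
  have hb : (ofOverlaps h).b n = b := by simp [ofOverlaps]
  have hn : (0 : ℤ) ≤ n := n.cast_nonneg
  have hcover := isOuterCover_of_not_dominated (L := ofOverlaps h) (P := P) (isLeast_Icc hn)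
    (isGreatest_Icc hn) hP
  rw [ha, hb] at hcover
  refine hcover hU ?_
  rintro i ⟨_, _⟩ ⟨_, _⟩
  simp only [ofOverlaps, add_sub_cancel_right]
  rw [dif_pos (by lia), dif_pos (by lia)]
  exact hdom _

end LinkedList

section Sorting

variable {ι α : Type*} [LinearOrder α]

theorem exists_equiv_fin_monotone (s : Finset ι) (c : ι → α) :
    ∃ e : Fin s.card ≃ s, Monotone fun i => c (e i) :=
  ⟨(Tuple.sort fun i => c (s.equivFin.symm i)).trans s.equivFin.symm,
    Tuple.monotone_sort fun i => c (s.equivFin.symm i)⟩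

variable [DenselyOrdered α] {s : Finset ι} {c d : ι → α}

theorem right_le_left_of_disjoint_Ioo {a₁ b₁ a₂ b₂ : α}
    (hdisj : Disjoint (Ioo a₁ b₁) (Ioo a₂ b₂)) (ha : a₁ ≤ a₂) (h₂ : a₂ < b₂) : b₁ ≤ a₂ := by
  rw [Ioo_disjoint_Ioo, max_eq_right ha, min_le_iff] at hdisj
  exact hdisj.resolve_right h₂.not_ge

theorem exists_equiv_fin_right_le_left (hcd : ∀ i ∈ s, c i < d i)
    (hdisj : (s : Set ι).PairwiseDisjoint fun i => Ioo (c i) (d i)) :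
    ∃ e : Fin s.card ≃ s, ∀ i j, i < j → d (e i) ≤ c (e j) := by
  obtain ⟨e, he⟩ := exists_equiv_fin_monotone s c
  refine ⟨e, fun i j hij => right_le_left_of_disjoint_Ioo ?_ (he hij.le) (hcd _ (e j).2)⟩
  exact hdisj (e i).2 (e j).2 fun heq => hij.ne (e.injective (Subtype.ext heq))

theorem exists_isEndpointChain {a b : α} (hab : a < b) (hcd : ∀ i ∈ s, c i < d i)
    (hsub : ∀ i ∈ s, Ioo (c i) (d i) ⊆ Ioo a b)
    (hdisj : (s : Set ι).PairwiseDisjoint fun i => Ioo (c i) (d i)) :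
    ∃ p : Fin ((s.card - 1) / 2) → s,
      IsEndpointChain a b (fun j => c (p j)) (fun j => d (p j)) := by
  obtain ⟨e, he⟩ := exists_equiv_fin_right_le_left hcd hdisj
  have hlt (i) : c (e i) < d (e i) := hcd _ (e i).2
  have hbound (i) : a ≤ c (e i) ∧ d (e i) ≤ b := (Ioo_subset_Ioo_iff (hlt i)).1 (hsub _ (e i).2)
  refine ⟨fun j => e ⟨2 * j + 1, by lia⟩, hab, fun j => ?_, fun j => hlt _, fun j => ?_,
    fun i j hij => ?_⟩
  · let prev : Fin s.card := ⟨2 * j, by lia⟩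
    exact ((hbound prev).1.trans_lt (hlt prev)).trans_le (he _ _ (Fin.mk_lt_mk.2 (by lia)))
  · let next : Fin s.card := ⟨2 * j + 2, by lia⟩
    exact (he _ next (Fin.mk_lt_mk.2 (by lia))).trans_lt ((hlt next).trans_le (hbound next).2)
  · let between : Fin s.card := ⟨2 * i + 2, by lia⟩
    exact (he _ between (Fin.mk_lt_mk.2 (by lia))).trans_lt
      ((hlt between).trans_le (he _ _ (Fin.mk_lt_mk.2 (by lia))))

end Sorting

theorem IsIntervalCollection.ordConnected {P : Set (Set ℝ)} (hP : IsIntervalCollection P) :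
    ∀ J ∈ P, J.OrdConnected := by
  intro J hJ
  obtain ⟨x, y, -, rfl⟩ := hP J hJ
  exact ordConnected_Ioo

theorem stmt18_general {ι : Type*} {P : Set (Set ℝ)} {a b : ℝ} (hab : a < b)
    (hP : ∀ J ∈ P, J.OrdConnected) (hU : ⋃₀ P ⊆ Ioo a b) {s : Finset ι} {c d : ι → ℝ}
    (hcd : ∀ i ∈ s, c i < d i) (hsub : ∀ i ∈ s, Ioo (c i) (d i) ⊆ Ioo a b)
    (hdisj : (s : Set ι).PairwiseDisjoint fun i => Ioo (c i) (d i))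
    (hdom : ∀ i ∈ s, ¬Dominated P (Ioo (c i) (d i))) :
    ∃ L : LinkedList, IsOuterCover P a b L ∧ L.S.Finite ∧ (s.card + 1) / 2 ≤ L.S.ncard := by
  obtain ⟨p, hp⟩ := exists_isEndpointChain hab hcd hsub hdisj
  refine ⟨.ofOverlaps hp, LinkedList.isOuterCover_ofOverlaps hp hP hU fun j => hdom _ (p j).2,
    finite_Icc _ _, ?_⟩
  have hncard : (LinkedList.ofOverlaps hp).S.ncard = (s.card - 1) / 2 + 1 := by
    simp only [LinkedList.ofOverlaps, ← Finset.coe_Icc, ncard_coe_finset, Int.card_Icc]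
    lia
  lia

/-- For `⋃₀ P ⊆ (a, b)`: if there are `k` pairwise disjoint nonempty open
subintervals `(c i, d i)` of `(a, b)`, none dominated by `P`, then `(a, b)` has an outer cover
with respect to `P` having at least `⌈k/2⌉` elements. -/
theorem stmt18 (P : Set (Set ℝ)) (a b : ℝ) (hab : a < b)
    (hP : IsIntervalCollection P) (hU : ⋃₀ P ⊆ Ioo a b)
    (k : ℕ) (c d : ℕ → ℝ)
    (hcd : ∀ i : ℕ, 1 ≤ i → i ≤ k → c i < d i)
    (hsub : ∀ i : ℕ, 1 ≤ i → i ≤ k → Ioo (c i) (d i) ⊆ Ioo a b)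
    (hdisj : ∀ i j : ℕ, 1 ≤ i → i ≤ k → 1 ≤ j → j ≤ k → i ≠ j →
      Disjoint (Ioo (c i) (d i)) (Ioo (c j) (d j)))
    (hdom : ∀ i : ℕ, 1 ≤ i → i ≤ k → ¬Dominated P (Ioo (c i) (d i))) :
    ∃ L : LinkedList, IsOuterCover P a b L ∧ (L.S.Infinite ∨ (k + 1) / 2 ≤ L.S.ncard) := by
  obtain ⟨L, hL, -, hcard⟩ := stmt18_general (s := Finset.Icc 1 k) hab hP.ordConnected hU
    (by simpa using hcd) (by simpa using hsub)
    (by intro i hi j hj; rw [Finset.coe_Icc] at hi hj; exact hdisj i j hi.1 hi.2 hj.1 hj.2)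
    (by simpa using hdom)
  exact ⟨L, hL, .inr (by simpa using hcard)⟩
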